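/- For every γ with 0 < γ < 1 and every k ∈ ℕ with k ≥ 1, there exists a constant c > 0 depending only on γ and k (in particular independent of n) such that for every n ∈ ℕ, every f : C_n → ℝ whose Fourier coefficients satisfy f̂(∅) = 0 and f̂(S) = 0 whenever |S| > k, and every t ≥ 0, one has ‖e^{tΔ_γ} f‖₁ ≤ e^{−c t} ‖f‖₁. -/

import Mathlib

open Finset MeasureTheory Real

noncomputable section

/-- Expectation on the Hamming cube `{-1,1}^n`, modeled as `Fin n → Bool`
(`true ↔ 1`, `false ↔ -1`), with the uniform probability measure. -/
def cubeE {n : ℕ} (f : (Fin n → Bool) → ℝ) : ℝ :=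
  (∑ x : Fin n → Bool, f x) / 2 ^ n

/-- The Walsh monomial `x^S = ∏_{i ∈ S} x_i`. -/
def walsh {n : ℕ} (S : Finset (Fin n)) (x : Fin n → Bool) : ℝ :=
  ∏ i ∈ S, (if x i then (1 : ℝ) else -1)

/-- Fourier coefficient `f̂(S) = E (f · x^S)`. -/
def cubeFourier {n : ℕ} (f : (Fin n → Bool) → ℝ) (S : Finset (Fin n)) : ℝ :=
  cubeE fun x => f x * walsh S x

/-- The heat semigroup `e^{tΔ} f = Σ_S e^{-t|S|} f̂(S) x^S`. -/
def heat1 {n : ℕ} (t : ℝ) (f : (Fin n → Bool) → ℝ) : (Fin n → Bool) → ℝ :=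
  fun x => ∑ S : Finset (Fin n), Real.exp (-t * (S.card : ℝ)) * cubeFourier f S * walsh S x

/-- The fractional heat semigroup `e^{tΔ_γ} f = Σ_S e^{-t|S|^γ} f̂(S) x^S`. -/
def heatFrac {n : ℕ} (γ t : ℝ) (f : (Fin n → Bool) → ℝ) : (Fin n → Bool) → ℝ :=
  fun x => ∑ S : Finset (Fin n), Real.exp (-t * (S.card : ℝ) ^ γ) * cubeFourier f S * walsh S x

/-- The Laplacian `Δf = -Σ_S |S| f̂(S) x^S`. -/
def lap {n : ℕ} (f : (Fin n → Bool) → ℝ) : (Fin n → Bool) → ℝ :=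
  fun x => -∑ S : Finset (Fin n), (S.card : ℝ) * cubeFourier f S * walsh S x

/-- The fractional Laplacian `Δ_γ f = -Σ_S |S|^γ f̂(S) x^S`. -/
def fracLap {n : ℕ} (γ : ℝ) (f : (Fin n → Bool) → ℝ) : (Fin n → Bool) → ℝ :=
  fun x => -∑ S : Finset (Fin n), (S.card : ℝ) ^ γ * cubeFourier f S * walsh S x

/-- The discrete partial derivative `∇_j f`. -/
def cubeGrad {n : ℕ} (j : Fin n) (f : (Fin n → Bool) → ℝ) (x : Fin n → Bool) : ℝ :=
  (f (Function.update x j true) - f (Function.update x j false)) / 2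

/-- The squared length of the discrete gradient, `|∇f|²(x) = Σ_j |∇_j f(x)|²`. -/
def gradSq {n : ℕ} (f : (Fin n → Bool) → ℝ) (x : Fin n → Bool) : ℝ :=
  ∑ j : Fin n, (cubeGrad j f x) ^ 2

/-- The `L^p` norm `‖f‖_p = (E|f|^p)^{1/p}` on the Hamming cube. -/
def pNorm {n : ℕ} (p : ℝ) (f : (Fin n → Bool) → ℝ) : ℝ :=
  (cubeE fun x => |f x| ^ p) ^ (1 / p)

/-! The number operator `-Δ = ∑ⱼ (1 - flipⱼ) / 2` is accretive for every seminorm invariant under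
the coordinate flips, by the triangle inequality alone; hence all the resolvents `t (t - Δ)⁻¹` are
contractions, whatever `n`. On the levels `1, …, k`, Lagrange interpolation writes `(-Δ)⁻¹` as a
polynomial in the contraction `(1 - Δ)⁻¹`, with coefficients depending only on `k`. Thus `(-Δ)⁻¹`
is bounded there independently of `n`, and the resolvents have norm at most `1/2` for small `t`.

Pairing `m ^ γ = C ∫ t ^ (γ - 1) (1 - t / (t + m)) dt` with a norming functional of `f` turns these
two bounds into strict accretivity, `‖(1 + h (-Δ) ^ γ) f‖ ≥ (1 + h c) ‖f‖` for `h ≥ 0`. Taking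
`h = t / i` and iterating `i` times gives `‖e ^ (t (-Δ) ^ γ) f‖ ≥ e ^ (t c) ‖f‖` as `i → ∞`. -/

section Fourier

variable {n : ℕ}

lemma sum_walsh_mul_walsh (x y : Fin n → Bool) :
    ∑ S : Finset (Fin n), walsh S x * walsh S y = if x = y then 2 ^ n else 0 := by
  have hprod : ∑ S : Finset (Fin n), walsh S x * walsh S y =
      ∏ i, (1 + (if x i then (1 : ℝ) else -1) * (if y i then 1 else -1)) := by
    simp only [walsh, ← prod_mul_distrib, prod_one_add, powerset_univ]
  rw [hprod]
  split_ifs with hxy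
  · have hfactor (b : Bool) :
        1 + (if b then (1 : ℝ) else -1) * (if b then 1 else -1) = 2 := by
      cases b <;> norm_num
    simp only [hxy, hfactor, prod_const, card_univ, Fintype.card_fin]
  · obtain ⟨i, hi⟩ := Function.ne_iff.mp hxy
    refine prod_eq_zero (mem_univ i) ?_
    cases hx : x i <;> cases hy : y i <;> simp_all

lemma cubeE_walsh_mul_walsh (S T : Finset (Fin n)) :
    cubeE (fun x => walsh S x * walsh T x) = if S = T then 1 else 0 := by
  let W : Matrix (Fin n → Bool) (Finset (Fin n)) ℝ := .of fun x S => walsh S x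
  have hrows : W * ((2 ^ n : ℝ)⁻¹ • W.transpose) = 1 := by
    ext x y
    rw [Matrix.mul_smul, Matrix.smul_apply, Matrix.mul_apply, Matrix.one_apply]
    simp only [W, Matrix.transpose_apply, Matrix.of_apply, sum_walsh_mul_walsh, smul_eq_mul]
    split_ifs <;> simp
  have hcols : ((2 ^ n : ℝ)⁻¹ • W.transpose) * W = 1 :=
    (Matrix.mul_eq_one_comm_of_card_eq _ _ _ (by simp)).mp hrows
  simpa [W, cubeE, Matrix.mul_apply, Matrix.one_apply, div_eq_inv_mul, mul_sum, mul_assoc] using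
    congr_fun₂ hcols S T

lemma sum_cubeFourier_mul_walsh (f : (Fin n → Bool) → ℝ) (x : Fin n → Bool) :
    ∑ S, cubeFourier f S * walsh S x = f x := by
  calc ∑ S, cubeFourier f S * walsh S x
      = ∑ y, f y / 2 ^ n * ∑ S, walsh S y * walsh S x := by
        simp only [cubeFourier, cubeE, sum_div, sum_mul, mul_sum]
        rw [sum_comm]
        exact sum_congr rfl fun y _ => sum_congr rfl fun S _ => by ring
    _ = f x := by simp [sum_walsh_mul_walsh]

lemma cubeFourier_sum_mul_walsh (a : Finset (Fin n) → ℝ) (T : Finset (Fin n)) :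
    cubeFourier (fun x => ∑ S, a S * walsh S x) T = a T := by
  calc cubeFourier (fun x => ∑ S, a S * walsh S x) T
      = ∑ S, a S * cubeE (fun x => walsh S x * walsh T x) := by
        simp only [cubeFourier, cubeE, sum_mul, mul_div_assoc', mul_sum, ← sum_div]
        rw [sum_comm]
        simp only [mul_assoc]
    _ = a T := by simp [cubeE_walsh_mul_walsh]

/-- The Fourier–Walsh transform `f ↦ f̂` as a linear equivalence. -/
def fourierWalsh (n : ℕ) : ((Fin n → Bool) → ℝ) ≃ₗ[ℝ] (Finset (Fin n) → ℝ) where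
  toFun := cubeFourier
  invFun a x := ∑ S, a S * walsh S x
  map_add' f g := by
    ext S
    simp only [cubeFourier, cubeE, Pi.add_apply, add_mul, sum_add_distrib, add_div]
  map_smul' r f := by
    ext S
    simp only [cubeFourier, cubeE, Pi.smul_apply, smul_eq_mul, RingHom.id_apply, mul_assoc,
      ← mul_sum, mul_div_assoc]
  left_inv f := funext (sum_cubeFourier_mul_walsh f)
  right_inv a := funext (cubeFourier_sum_mul_walsh a)

lemma fourierWalsh_apply (f : (Fin n → Bool) → ℝ) (S : Finset (Fin n)) :
    fourierWalsh n f S = cubeFourier f S := rfl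

/-- The radial Fourier multiplier `x^S ↦ φ(|S|) x^S`. As a function of the symbol `φ` this is the
functional calculus of the number operator `-Δ`, hence its bundling as an algebra homomorphism. -/
def radialMultiplier (n : ℕ) : (ℕ → ℝ) →ₐ[ℝ] Module.End ℝ ((Fin n → Bool) → ℝ) :=
  ((fourierWalsh n).symm.conjAlgEquiv ℝ).toAlgHom.comp <|
    (Algebra.lmul ℝ (Finset (Fin n) → ℝ)).comp <|
      AlgHom.pi fun S => Pi.evalAlgHom ℝ (fun _ : ℕ => ℝ) S.card

lemma radialMultiplier_apply (φ : ℕ → ℝ) (f : (Fin n → Bool) → ℝ) (x : Fin n → Bool) :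
    radialMultiplier n φ f x = ∑ S, φ S.card * cubeFourier f S * walsh S x := rfl

lemma cubeFourier_radialMultiplier (φ : ℕ → ℝ) (f : (Fin n → Bool) → ℝ) (S : Finset (Fin n)) :
    cubeFourier (radialMultiplier n φ f) S = φ S.card * cubeFourier f S :=
  cubeFourier_sum_mul_walsh _ S

lemma heatFrac_eq_radialMultiplier (γ t : ℝ) (f : (Fin n → Bool) → ℝ) :
    heatFrac γ t f = radialMultiplier n (fun m => exp (-t * (m : ℝ) ^ γ)) f := rfl

/-- A mean-zero function of degree at most `k`: its spectrum lies in the levels `1, …, k`. -/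
def IsBandLimited (k : ℕ) (f : (Fin n → Bool) → ℝ) : Prop :=
  ∀ S, S.card ∉ Finset.Icc 1 k → cubeFourier f S = 0

lemma IsBandLimited.map_radialMultiplier {k : ℕ} {f : (Fin n → Bool) → ℝ} (hf : IsBandLimited k f)
    (φ : ℕ → ℝ) : IsBandLimited k (radialMultiplier n φ f) := fun S hS => by
  rw [cubeFourier_radialMultiplier, hf S hS, mul_zero]

lemma IsBandLimited.radialMultiplier_congr {k : ℕ} {f : (Fin n → Bool) → ℝ}
    (hf : IsBandLimited k f) {φ ψ : ℕ → ℝ} (hφψ : ∀ m ∈ Finset.Icc 1 k, φ m = ψ m) :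
    radialMultiplier n φ f = radialMultiplier n ψ f := by
  ext x
  rw [radialMultiplier_apply, radialMultiplier_apply]
  refine Finset.sum_congr rfl fun S _ => ?_
  by_cases hS : S.card ∈ Finset.Icc 1 k
  · rw [hφψ _ hS]
  · rw [hf S hS, mul_zero, mul_zero]

end Fourier

section Flip

variable {n : ℕ}

/-- Reversal of the `j`-th coordinate of a point of the cube. -/
def flipAt (j : Fin n) (x : Fin n → Bool) : Fin n → Bool :=
  Function.update x j (!x j)

lemma flipAt_involutive (j : Fin n) : Function.Involutive (flipAt j) := fun x => by
  simp [flipAt]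

lemma cubeE_comp_flipAt (j : Fin n) (F : (Fin n → Bool) → ℝ) : cubeE (F ∘ flipAt j) = cubeE F :=
  congrArg (· / 2 ^ n) (Equiv.sum_comp (flipAt_involutive j).toPerm F)

lemma walsh_flipAt (j : Fin n) (S : Finset (Fin n)) (x : Fin n → Bool) :
    walsh S (flipAt j x) = (if j ∈ S then -1 else 1) * walsh S x := by
  have hcoord (i : Fin n) : (if flipAt j x i then (1 : ℝ) else -1) =
      (if j = i then -1 else 1) * (if x i then 1 else -1) := by
    rcases eq_or_ne j i with rfl | hij
    · cases hx : x j <;> simp [flipAt, hx]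
    · simp [flipAt, hij, hij.symm]
  simp only [walsh, hcoord, prod_mul_distrib, prod_ite_eq]

lemma cubeFourier_comp_flipAt (j : Fin n) (f : (Fin n → Bool) → ℝ) (S : Finset (Fin n)) :
    cubeFourier (f ∘ flipAt j) S = (if j ∈ S then -1 else 1) * cubeFourier f S := by
  calc cubeFourier (f ∘ flipAt j) S
      = cubeE ((fun x => f x * walsh S (flipAt j x)) ∘ flipAt j) := by
        simp only [cubeFourier, Function.comp_def, flipAt_involutive j _]
    _ = cubeE (fun x => f x * walsh S (flipAt j x)) := cubeE_comp_flipAt j _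
    _ = (if j ∈ S then -1 else 1) * cubeFourier f S := by
        simp only [walsh_flipAt, cubeFourier, cubeE, mul_left_comm (f _), ← mul_sum, mul_div_assoc]

lemma radialMultiplier_natCast (f : (Fin n → Bool) → ℝ) :
    radialMultiplier n (↑) f = ∑ j, (1 / 2 : ℝ) • (f - f ∘ flipAt j) := by
  refine (fourierWalsh n).injective (funext fun S => ?_)
  have hlevel : ∑ j, (if j ∈ S then (1 : ℝ) else 0) = S.card := by simp
  simp only [map_sum, map_smul, map_sub, Finset.sum_apply, Pi.smul_apply, Pi.sub_apply, smul_eq_mul]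
  simp only [fourierWalsh_apply, cubeFourier_radialMultiplier, cubeFourier_comp_flipAt]
  rw [← hlevel, sum_mul]
  refine Finset.sum_congr rfl fun j _ => ?_
  split_ifs <;> ring

end Flip

section Seminorm

variable {E : Type*} [AddCommGroup E] [Module ℝ E] (ρ : Seminorm ℝ E)

lemma exists_dual_eq_seminorm (u : E) : ∃ ℓ : Module.Dual ℝ E, ℓ u = ρ u ∧ ∀ v, ℓ v ≤ ρ v := by
  rcases eq_or_ne u 0 with rfl | hu
  · exact ⟨0, by simp, fun v => apply_nonneg ρ v⟩
  let g : E →ₗ.[ℝ] ℝ := LinearPMap.mkSpanSingleton u (ρ u) hu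
  have hg : ∀ x : g.domain, g x ≤ ρ x := by
    rintro ⟨x, hx⟩
    obtain ⟨a, rfl⟩ := Submodule.mem_span_singleton.mp hx
    rw [LinearPMap.mkSpanSingleton'_apply, map_smul_eq_mul, smul_eq_mul]
    gcongr
    exact le_abs_self a
  obtain ⟨ℓ, hℓg, hℓ⟩ := Module.Dual.exists_extension_of_le_seminorm_real g.domain g.toFun hg
  refine ⟨ℓ, ?_, fun v => (le_abs_self _).trans (hℓ v)⟩
  exact (hℓg ⟨u, Submodule.mem_span_singleton_self u⟩).trans
    (LinearPMap.mkSpanSingleton_apply ℝ ℝ hu _)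

variable {ρ}

lemma pow_mul_seminorm_le {T : Module.End ℝ E} {s : Set E} {a : ℝ} (ha : 0 ≤ a)
    (hs : Set.MapsTo T s s) (hT : ∀ u ∈ s, a * ρ u ≤ ρ (T u)) (i : ℕ) {u : E} (hu : u ∈ s) :
    a ^ i * ρ u ≤ ρ ((T ^ i) u) := by
  induction i generalizing u with
  | zero => simp
  | succ i ih =>
    calc a ^ (i + 1) * ρ u = a ^ i * (a * ρ u) := by ring
      _ ≤ a ^ i * ρ (T u) := by gcongr; exact hT u hu
      _ ≤ ρ ((T ^ (i + 1)) u) := ih (hs hu)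

lemma seminorm_aeval_apply_le {T : Module.End ℝ E} (hT : ∀ u, ρ (T u) ≤ ρ u)
    (q : Polynomial ℝ) (u : E) :
    ρ (Polynomial.aeval T q u) ≤ (q.sum fun _ a => |a|) * ρ u := by
  have hpow (i : ℕ) : ρ ((T ^ i) u) ≤ ρ u := by
    induction i with
    | zero => simp
    | succ i ih => rw [pow_succ']; exact (hT _).trans ih
  rw [Polynomial.aeval_eq_sum_range, Polynomial.sum_over_range _ fun _ => abs_zero,
    LinearMap.sum_apply, sum_mul]
  refine (le_sum_of_subadditive ρ (map_zero ρ).le (map_add_le_add ρ) _ _).trans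
    (sum_le_sum fun i _ => ?_)
  rw [LinearMap.smul_apply, map_smul_eq_mul, Real.norm_eq_abs]
  gcongr
  exact hpow i

end Seminorm

section FlipInvariant

variable {n : ℕ}

/-- Invariance of a seminorm under the coordinate reversals of the cube. The `L^p` norms are the
main examples. -/
def FlipInvariant (ρ : Seminorm ℝ ((Fin n → Bool) → ℝ)) : Prop :=
  ∀ j u, ρ (u ∘ flipAt j) = ρ u

variable {ρ : Seminorm ℝ ((Fin n → Bool) → ℝ)}

lemma FlipInvariant.le_one_add_smul_natCast (hρ : FlipInvariant ρ) {h : ℝ} (hh : 0 ≤ h)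
    (u : (Fin n → Bool) → ℝ) : ρ u ≤ ρ (radialMultiplier n (1 + h • (↑)) u) := by
  have hsplit : (1 + h / 2 * n) • u =
      radialMultiplier n (1 + h • (↑)) u + (h / 2) • ∑ j, u ∘ flipAt j := by
    simp only [map_add, map_one, map_smul, LinearMap.add_apply, LinearMap.smul_apply,
      Module.End.one_apply, radialMultiplier_natCast, ← smul_sum, sum_sub_distrib, sum_const,
      card_univ, Fintype.card_fin]
    module
  have hflips : ρ (∑ j, u ∘ flipAt j) ≤ n * ρ u :=
    calc ρ (∑ j, u ∘ flipAt j) ≤ ∑ j, ρ (u ∘ flipAt j) :=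
          le_sum_of_subadditive ρ (map_zero ρ).le (map_add_le_add ρ) _ _
      _ = n * ρ u := by simp [hρ _ u]
  have htriangle : (1 + h / 2 * n) * ρ u ≤
      ρ (radialMultiplier n (1 + h • (↑)) u) + h / 2 * (n * ρ u) :=
    calc (1 + h / 2 * n) * ρ u = ρ ((1 + h / 2 * n) • u) := by
          rw [map_smul_eq_mul, Real.norm_of_nonneg (by positivity)]
      _ ≤ ρ (radialMultiplier n (1 + h • (↑)) u) + h / 2 * ρ (∑ j, u ∘ flipAt j) := by
          rw [hsplit]
          refine (map_add_le_add ρ _ _).trans_eq ?_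
          rw [map_smul_eq_mul, Real.norm_of_nonneg (by positivity)]
      _ ≤ _ := by gcongr
  linarith

lemma FlipInvariant.resolvent_le (hρ : FlipInvariant ρ) {t : ℝ} (ht : 0 < t)
    (u : (Fin n → Bool) → ℝ) : ρ (radialMultiplier n (fun m => t / (t + m)) u) ≤ ρ u := by
  have hinv : (1 + t⁻¹ • (↑) : ℕ → ℝ) * (fun m : ℕ => t / (t + m)) = 1 := by
    ext m
    simp only [Pi.mul_apply, Pi.add_apply, Pi.smul_apply, Pi.one_apply, smul_eq_mul]
    field_simp
  have hle := hρ.le_one_add_smul_natCast (inv_nonneg.mpr ht.le)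
    (radialMultiplier n (fun m => t / (t + m)) u)
  rwa [← Module.End.mul_apply, ← map_mul, hinv, map_one, Module.End.one_apply] at hle

lemma exists_seminorm_inv_natCast_le (k : ℕ) :
    ∃ Q > 0, ∀ (n : ℕ) (ρ : Seminorm ℝ ((Fin n → Bool) → ℝ)), FlipInvariant ρ →
      ∀ f, IsBandLimited k f →
        ρ (radialMultiplier n (fun m => (m : ℝ)⁻¹) f) ≤ Q * ρ f := by
  let v : ℕ → ℝ := fun m => 1 / (1 + m)
  have hv : Set.InjOn v (Finset.Icc 1 k) := fun a _ b _ hab => by simpa [v] using hab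
  let q : Polynomial ℝ := Lagrange.interpolate (Finset.Icc 1 k) v fun m => (m : ℝ)⁻¹
  have hq : ∀ m ∈ Finset.Icc 1 k, (m : ℝ)⁻¹ = Polynomial.aeval v q m := fun m hm => by
    rw [Polynomial.aeval_pi_apply₂, Polynomial.coe_aeval_eq_eval]
    exact (Lagrange.eval_interpolate_at_node (fun m : ℕ => (m : ℝ)⁻¹) hv hm).symm
  refine ⟨1 + q.sum fun _ a => |a|, ?_, fun n ρ hρ f hf => ?_⟩
  · have : 0 ≤ q.sum fun _ a => |a| := sum_nonneg fun _ _ => abs_nonneg _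
    positivity
  calc ρ (radialMultiplier n (fun m => (m : ℝ)⁻¹) f)
      = ρ (Polynomial.aeval (radialMultiplier n v) q f) := by
        rw [hf.radialMultiplier_congr hq, Polynomial.aeval_algHom_apply]
    _ ≤ (q.sum fun _ a => |a|) * ρ f :=
        seminorm_aeval_apply_le (hρ.resolvent_le one_pos) q f
    _ ≤ (1 + q.sum fun _ a => |a|) * ρ f := by gcongr; linarith

lemma exists_seminorm_resolvent_le_half (k : ℕ) :
    ∃ t₀ > 0, ∀ (n : ℕ) (ρ : Seminorm ℝ ((Fin n → Bool) → ℝ)), FlipInvariant ρ →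
      ∀ f, IsBandLimited k f → ∀ t ∈ Set.Ioc 0 t₀,
        ρ (radialMultiplier n (fun m => t / (t + m)) f) ≤ 1 / 2 * ρ f := by
  obtain ⟨Q, hQ, hinv⟩ := exists_seminorm_inv_natCast_le k
  refine ⟨1 / (4 * Q), by positivity, fun n ρ hρ f hf t ⟨ht, ht₀⟩ => ?_⟩
  set r : ℕ → ℝ := fun m => t / (t + m)
  have hfactor : radialMultiplier n r f =
      t • radialMultiplier n (fun m => (m : ℝ)⁻¹) (radialMultiplier n (1 - r) f) := by
    rw [← Module.End.mul_apply, ← map_mul, ← LinearMap.smul_apply, ← map_smul]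
    refine hf.radialMultiplier_congr fun m hm => ?_
    have hm0 : (m : ℝ) ≠ 0 := by have := (Finset.mem_Icc.mp hm).1; positivity
    simp only [r, Pi.smul_apply, Pi.mul_apply, Pi.sub_apply, Pi.one_apply, smul_eq_mul]
    field_simp
    ring
  have hcompl : ρ (radialMultiplier n (1 - r) f) ≤ 2 * ρ f := by
    rw [map_sub, map_one, LinearMap.sub_apply, Module.End.one_apply]
    linarith [map_sub_le_add ρ f (radialMultiplier n r f), hρ.resolvent_le ht f]
  calc ρ (radialMultiplier n r f)
      = t * ρ (radialMultiplier n (fun m => (m : ℝ)⁻¹) (radialMultiplier n (1 - r) f)) := by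
        rw [hfactor, map_smul_eq_mul, Real.norm_of_nonneg ht.le]
    _ ≤ 1 / (4 * Q) * (Q * (2 * ρ f)) := by
        gcongr
        exact (hinv n ρ hρ _ (hf.map_radialMultiplier _)).trans (by gcongr)
    _ = 1 / 2 * ρ f := by field_simp; ring

end FlipInvariant

section FractionalPower

variable {n : ℕ} {γ : ℝ}

lemma apply_radialMultiplier_eq_sum (ℓ : Module.Dual ℝ ((Fin n → Bool) → ℝ)) (φ : ℕ → ℝ)
    (f : (Fin n → Bool) → ℝ) :
    ℓ (radialMultiplier n φ f) = ∑ S, φ S.card * ℓ (cubeFourier f S • walsh S) := by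
  have hsum : radialMultiplier n φ f = ∑ S, φ S.card • cubeFourier f S • walsh S := by
    ext x
    simp [radialMultiplier_apply, mul_assoc]
  simp only [hsum, map_sum, map_smul, smul_eq_mul]

lemma integrableOn_apply_radialMultiplier_rpowIntegrand₀₁ (hγ : γ ∈ Set.Ioo 0 1)
    (ℓ : Module.Dual ℝ ((Fin n → Bool) → ℝ)) (f : (Fin n → Bool) → ℝ) :
    IntegrableOn (fun t => ℓ (radialMultiplier n (fun m => rpowIntegrand₀₁ γ t m) f))
      (Set.Ioi 0) := by
  simp only [apply_radialMultiplier_eq_sum]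
  exact integrable_finsetSum _ fun S _ =>
    (integrableOn_rpowIntegrand₀₁_Ioi hγ S.card.cast_nonneg).mul_const _

lemma apply_radialMultiplier_rpow_eq_integral (hγ : γ ∈ Set.Ioo 0 1)
    (ℓ : Module.Dual ℝ ((Fin n → Bool) → ℝ)) (f : (Fin n → Bool) → ℝ) :
    ℓ (radialMultiplier n (fun m => (m : ℝ) ^ γ) f) =
      (∫ t in Set.Ioi 0, rpowIntegrand₀₁ γ t 1)⁻¹ *
        ∫ t in Set.Ioi 0, ℓ (radialMultiplier n (fun m => rpowIntegrand₀₁ γ t m) f) := by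
  simp only [apply_radialMultiplier_eq_sum]
  rw [integral_finsetSum _ fun S _ =>
    (integrableOn_rpowIntegrand₀₁_Ioi hγ S.card.cast_nonneg).mul_const _, mul_sum]
  refine sum_congr rfl fun S _ => ?_
  rw [integral_mul_const, rpow_eq_const_mul_integral hγ S.card.cast_nonneg, mul_assoc]

lemma apply_radialMultiplier_rpowIntegrand₀₁ (hγ : γ ∈ Set.Ioo 0 1) {t : ℝ} (ht : 0 < t)
    (ℓ : Module.Dual ℝ ((Fin n → Bool) → ℝ)) (f : (Fin n → Bool) → ℝ) :
    ℓ (radialMultiplier n (fun m => rpowIntegrand₀₁ γ t m) f) =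
      t ^ (γ - 1) * (ℓ f - ℓ (radialMultiplier n (fun m => t / (t + m)) f)) := by
  have hsymbol : (fun m : ℕ => rpowIntegrand₀₁ γ t m) =
      t ^ (γ - 1) • (1 - fun m : ℕ => t / (t + m)) := by
    ext m
    simp only [Pi.smul_apply, Pi.sub_apply, Pi.one_apply, smul_eq_mul,
      rpowIntegrand₀₁_eq_pow_div hγ ht.le m.cast_nonneg]
    field_simp
    ring
  simp [hsymbol]

lemma rpow_mul_le_setIntegral_Ioi {F : ℝ → ℝ} {a t₀ : ℝ} (hγ : γ ≤ 1) (ha : 0 ≤ a)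
    (ht₀ : 0 < t₀) (hF : IntegrableOn F (Set.Ioi 0)) (hF0 : ∀ t > 0, 0 ≤ F t)
    (hFa : ∀ t ∈ Set.Ioc 0 t₀, t ^ (γ - 1) * a ≤ F t) :
    t₀ ^ γ * a ≤ ∫ t in Set.Ioi 0, F t := by
  calc t₀ ^ γ * a = ∫ _ in Set.Ioc 0 t₀, t₀ ^ (γ - 1) * a := by
        rw [setIntegral_const, volume_real_Ioc_of_le ht₀.le, sub_zero, smul_eq_mul, ← mul_assoc,
          mul_comm t₀, ← rpow_add_one ht₀.ne', sub_add_cancel]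
    _ ≤ ∫ t in Set.Ioc 0 t₀, F t := by
        refine setIntegral_mono_on (integrableOn_const (by simp))
          (hF.mono_set Set.Ioc_subset_Ioi_self) measurableSet_Ioc fun t ht => ?_
        refine le_trans ?_ (hFa t ht)
        gcongr ?_ * a
        exact rpow_le_rpow_of_nonpos ht.1 ht.2 (by linarith)
    _ ≤ ∫ t in Set.Ioi 0, F t := by
        refine setIntegral_mono_set hF ?_ Set.Ioc_subset_Ioi_self.eventuallyLE
        filter_upwards [ae_restrict_mem measurableSet_Ioi] with t ht using hF0 t ht

lemma exists_one_add_mul_seminorm_le_rpow (hγ : γ ∈ Set.Ioo 0 1) (k : ℕ) :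
    ∃ c > 0, ∀ (n : ℕ) (ρ : Seminorm ℝ ((Fin n → Bool) → ℝ)), FlipInvariant ρ →
      ∀ f, IsBandLimited k f → ∀ h ≥ 0,
        (1 + h * c) * ρ f ≤ ρ (radialMultiplier n (1 + h • fun m : ℕ => (m : ℝ) ^ γ) f) := by
  obtain ⟨t₀, ht₀, hhalf⟩ := exists_seminorm_resolvent_le_half k
  have hI : 0 < ∫ t in Set.Ioi 0, rpowIntegrand₀₁ γ t 1 := integral_rpowIntegrand₀₁_one_pos hγ
  set I := ∫ t in Set.Ioi 0, rpowIntegrand₀₁ γ t 1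
  refine ⟨I⁻¹ * (t₀ ^ γ * (1 / 2)), by positivity, fun n ρ hρ f hf h hh => ?_⟩
  obtain ⟨ℓ, hℓf, hℓ⟩ := exists_dual_eq_seminorm ρ f
  have hdissip : I⁻¹ * (t₀ ^ γ * (1 / 2)) * ρ f ≤
      ℓ (radialMultiplier n (fun m : ℕ => (m : ℝ) ^ γ) f) := by
    rw [apply_radialMultiplier_rpow_eq_integral hγ, mul_assoc, mul_assoc]
    gcongr
    refine rpow_mul_le_setIntegral_Ioi hγ.2.le (by positivity) ht₀
      (integrableOn_apply_radialMultiplier_rpowIntegrand₀₁ hγ ℓ f) (fun t ht => ?_)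
      fun t ht => ?_
    · rw [apply_radialMultiplier_rpowIntegrand₀₁ hγ ht, hℓf]
      exact mul_nonneg (rpow_nonneg ht.le _)
        (sub_nonneg.mpr ((hℓ _).trans (hρ.resolvent_le ht f)))
    · rw [apply_radialMultiplier_rpowIntegrand₀₁ hγ ht.1, hℓf]
      have := rpow_nonneg ht.1.le (γ - 1)
      gcongr
      linarith [hℓ (radialMultiplier n (fun m => t / (t + m)) f), hhalf n ρ hρ f hf t ht]
  calc (1 + h * (I⁻¹ * (t₀ ^ γ * (1 / 2)))) * ρ f
      = ρ f + h * (I⁻¹ * (t₀ ^ γ * (1 / 2)) * ρ f) := by ring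
    _ ≤ ℓ f + h * ℓ (radialMultiplier n (fun m : ℕ => (m : ℝ) ^ γ) f) := by rw [hℓf]; gcongr
    _ = ℓ (radialMultiplier n (1 + h • fun m : ℕ => (m : ℝ) ^ γ) f) := by simp
    _ ≤ ρ (radialMultiplier n (1 + h • fun m : ℕ => (m : ℝ) ^ γ) f) := hℓ _

end FractionalPower

section Semigroup

open Filter Topology

variable {n k : ℕ} {ρ : Seminorm ℝ ((Fin n → Bool) → ℝ)} {φ : ℕ → ℝ}

lemma tendsto_seminorm_radialMultiplier {α : Type*} {l : Filter α} {Φ : α → ℕ → ℝ}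
    (hΦ : Tendsto Φ l (𝓝 φ)) (f : (Fin n → Bool) → ℝ) :
    Tendsto (fun i => ρ (radialMultiplier n (Φ i) f)) l (𝓝 (ρ (radialMultiplier n φ f))) := by
  have hρ : Continuous ρ :=
    continuousOn_univ.mp (ρ.convexOn.continuousOn isOpen_univ)
  have hlim : Tendsto (fun i => radialMultiplier n (Φ i) f) l (𝓝 (radialMultiplier n φ f)) :=
    tendsto_pi_nhds.mpr fun x => by
      simp only [radialMultiplier_apply]
      exact tendsto_finsetSum _ fun S _ =>
        ((tendsto_pi_nhds.mp hΦ S.card).mul_const _).mul_const _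
  exact (hρ.tendsto _).comp hlim

lemma tendsto_one_add_div_smul_pow_exp (t : ℝ) (φ : ℕ → ℝ) :
    Tendsto (fun i : ℕ => (1 + (t / i) • φ) ^ i) atTop (𝓝 fun m => exp (t * φ m)) :=
  tendsto_pi_nhds.mpr fun m => (tendsto_one_add_div_pow_exp (t * φ m)).congr fun i => by
    simp [div_mul_eq_mul_div]

lemma exp_mul_seminorm_le_radialMultiplier {c : ℝ} (hc : 0 ≤ c)
    (hφ : ∀ f, IsBandLimited k f → ∀ h ≥ 0,
      (1 + h * c) * ρ f ≤ ρ (radialMultiplier n (1 + h • φ) f))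
    {f : (Fin n → Bool) → ℝ} (hf : IsBandLimited k f) {t : ℝ} (ht : 0 ≤ t) :
    exp (t * c) * ρ f ≤ ρ (radialMultiplier n (fun m => exp (t * φ m)) f) := by
  have hpow (i : ℕ) : (1 + t / i * c) ^ i * ρ f ≤
      ρ (radialMultiplier n ((1 + (t / i) • φ) ^ i) f) := by
    rw [map_pow]
    exact pow_mul_seminorm_le (s := {u | IsBandLimited k u}) (by positivity)
      (fun u hu => hu.map_radialMultiplier _) (fun u hu => hφ u hu _ (by positivity)) i hf
  have hexp : Tendsto (fun i : ℕ => (1 + t / i * c) ^ i) atTop (𝓝 (exp (t * c))) :=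
    (tendsto_one_add_div_pow_exp (t * c)).congr fun i => by rw [div_mul_eq_mul_div]
  exact le_of_tendsto_of_tendsto' (hexp.mul_const _)
    (tendsto_seminorm_radialMultiplier (tendsto_one_add_div_smul_pow_exp t φ) f) hpow

end Semigroup

section LpNorm

variable {n : ℕ} {p : ℝ}

/-- The `L^p` norm on the cube as a seminorm. -/
def pSeminorm (n : ℕ) (hp : 1 ≤ p) : Seminorm ℝ ((Fin n → Bool) → ℝ) :=
  Seminorm.of (pNorm p)
    (fun f g => by
      simp only [pNorm, cubeE, Pi.add_apply]
      rw [div_rpow (by positivity) (by positivity), div_rpow (by positivity) (by positivity),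
        div_rpow (by positivity) (by positivity), ← add_div]
      gcongr
      exact Lp_add_le _ f g hp)
    (fun a f => by
      have hp0 : p ≠ 0 := by linarith
      simp only [pNorm, cubeE, Pi.smul_apply, smul_eq_mul, abs_mul, Real.norm_eq_abs]
      simp_rw [mul_rpow (abs_nonneg _) (abs_nonneg _), ← mul_sum, mul_div_assoc]
      rw [mul_rpow (by positivity) (by positivity), one_div, rpow_rpow_inv (abs_nonneg a) hp0])

lemma flipInvariant_pSeminorm (hp : 1 ≤ p) : FlipInvariant (pSeminorm n hp) := fun j f =>
  congrArg (· ^ (1 / p)) (cubeE_comp_flipAt j fun x => |f x| ^ p)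

end LpNorm

theorem stmt7_general (γ : ℝ) (hγ0 : 0 < γ) (hγ1 : γ < 1) (k : ℕ) :
    ∃ c : ℝ, 0 < c ∧
      ∀ (n : ℕ) (ρ : Seminorm ℝ ((Fin n → Bool) → ℝ)), FlipInvariant ρ →
        ∀ f : (Fin n → Bool) → ℝ,
          cubeFourier f ∅ = 0 →
          (∀ S : Finset (Fin n), k < S.card → cubeFourier f S = 0) →
          ∀ t : ℝ, 0 ≤ t → ρ (heatFrac γ t f) ≤ Real.exp (-c * t) * ρ f := by
  obtain ⟨c, hc, hone_add⟩ := exists_one_add_mul_seminorm_le_rpow ⟨hγ0, hγ1⟩ k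
  refine ⟨c, hc, fun n ρ hρ f hf0 hfk t ht => ?_⟩
  have hf : IsBandLimited k f := fun S hS => by
    rcases S.eq_empty_or_nonempty with rfl | hne
    · exact hf0
    · have := hne.card_pos
      exact hfk S (by rw [Finset.mem_Icc] at hS; omega)
  have hinv : (fun m : ℕ => exp (t * (m : ℝ) ^ γ)) * (fun m : ℕ => exp (-t * (m : ℝ) ^ γ)) = 1 := by
    ext m
    simp [← exp_add]
  have hexp : exp (t * c) * ρ (heatFrac γ t f) ≤ ρ f := by
    rw [heatFrac_eq_radialMultiplier]
    have hle := exp_mul_seminorm_le_radialMultiplier hc.le (hone_add n ρ hρ)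
      (hf.map_radialMultiplier fun m => exp (-t * (m : ℝ) ^ γ)) ht
    rwa [← Module.End.mul_apply, ← map_mul, hinv, map_one, Module.End.one_apply] at hle
  rwa [neg_mul, exp_neg, mul_comm c t, le_inv_mul_iff₀ (exp_pos _)]

/-- `L¹` spectral gap for the fractional heat semigroup for band-limited
functions: for `0 < γ < 1` and `k ≥ 1` there is `c > 0` (depending only on `γ`
and `k`) such that for every `n`, every `f : C_n → ℝ` with `f̂(∅) = 0` and
`f̂(S) = 0` for `|S| > k`, and every `t ≥ 0`,
`‖e^{tΔ_γ} f‖₁ ≤ e^{-ct} ‖f‖₁`. -/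
theorem stmt7 (γ : ℝ) (hγ0 : 0 < γ) (hγ1 : γ < 1) (k : ℕ) (hk : 1 ≤ k) :
    ∃ c : ℝ, 0 < c ∧
      ∀ (n : ℕ) (f : (Fin n → Bool) → ℝ),
        cubeFourier f ∅ = 0 →
        (∀ S : Finset (Fin n), k < S.card → cubeFourier f S = 0) →
        ∀ t : ℝ, 0 ≤ t →
          pNorm 1 (heatFrac γ t f) ≤ Real.exp (-c * t) * pNorm 1 f := by
  obtain ⟨c, hc, hdecay⟩ := stmt7_general γ hγ0 hγ1 k
  exact ⟨c, hc, fun n => hdecay n (pSeminorm n le_rfl) (flipInvariant_pSeminorm le_rfl)⟩
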